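/- Let θ ∈ (0,1], let q be a probability vector over S with q_i > 0 for all i, let ξ be a probability vector over S with ξ_i > 0 for all i, for each i∈S let π_i be a probability vector over A with π_{i,a} > 0 for all a, and set λ_{i,a} = ξ_i π_{i,a} and μ_{i,a} = ((1−θ) ξ_i + θ q_i) π_{i,a}. Let v ∈ ℝ^S with 0 ≤ v_k ≤ 1/(1−γ) for all k∈S, let M = 1/(1−γ), and let β > 0. For each triple (i,a,j) ∈ S×A×S let Δ^{(i,a,j)} ∈ ℝ^{S×A} be the vector whose (i,a) entry equals β(γ v_j − v_i + r_{ij}(a) − M)/μ_{i,a} and whose other entries are 0, and let λ^{(i,a,j)} be the probability vector over S×A given by λ^{(i,a,j)}_{i',a'} = λ_{i',a'} exp(Δ^{(i,a,j)}_{i',a'}) / Σ_{i'',a''} λ_{i'',a''} exp(Δ^{(i,a,j)}_{i'',a''}). Then for every probability vector λ* over S×A: Σ_{(i,a,j)∈S×A×S} μ_{i,a} p_{ij}(a) D_KL(λ*||λ^{(i,a,j)}) − D_KL(λ*||λ) ≤ β Σ_{i∈S,a∈A} (λ_{i,a} − λ*_{i,a}) Σ_{j∈S} p_{ij}(a) (γ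 v_j − v_i + r_{ij}(a) − M) + (β²/2) Σ_{i∈S,a∈A} (λ_{i,a}/μ_{i,a}) Σ_{j∈S} p_{ij}(a) (γ v_j − v_i + r_{ij}(a) − M)². -/

import Mathlib

/-!
Each sampled increment `Δ` is supported on one entry `(i, a)`, where it equals `d = β g / μ i a`
with `g = γ v j - v i + r i a j - M`. The exponential-weights identity
`D(λ* ‖ λ') = D(λ* ‖ λ) + log Z - ⟨λ*, Δ⟩`, where `Z = 1 + λ i a (exp d - 1)`, reduces the drift to
a bound on `log Z`. The shift by `M = 1 / (1 - γ)` forces `g ≤ 0`, hence `d ≤ 0`, and then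
`log Z ≤ λ i a (exp d - 1) ≤ λ i a (d + d² / 2)`. Averaging against the probability weights
`μ i a * p i a j` turns `μ i a * d` into `β g` and `μ i a * d²` into `β² g² / μ i a`.
-/

/-- Kullback–Leibler divergence between probability vectors on `S × A`
(with the convention `0 · log 0 = 0`, which holds since `0 * Real.log _ = 0`). -/
noncomputable def klDiv2 {S A : Type*} [Fintype S] [Fintype A] (p q : S → A → ℝ) : ℝ :=
  ∑ i, ∑ a, p i a * Real.log (p i a / q i a)

/-- The second-order Taylor polynomial of `exp` is an upper bound on the nonpositive axis. -/
lemma exp_le_quadratic_of_nonpos {x : ℝ} (hx : x ≤ 0) : Real.exp x ≤ 1 + x + x ^ 2 / 2 := by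
  -- With `y = -x ≥ 0`, multiply `1 + y + y² / 2 ≤ exp y` by `1 - y + y² / 2 > 0`;
  -- the product of the two quadratics is `1 + y⁴ / 4 ≥ 1`.
  have h1 := Real.quadratic_le_exp_of_nonneg (neg_nonneg.mpr hx)
  have h2 : Real.exp x * Real.exp (-x) = 1 := by rw [← Real.exp_add]; simp
  have h3 : 0 < 1 + x + x ^ 2 / 2 := by nlinarith [sq_nonneg (x + 1)]
  have h4 := mul_le_mul_of_nonneg_left h1 h3.le
  have h5 : 1 ≤ (1 + x + x ^ 2 / 2) * Real.exp (-x) := by nlinarith [sq_nonneg (x ^ 2)]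
  have h6 := mul_le_mul_of_nonneg_left h5 (Real.exp_pos x).le
  calc Real.exp x ≤ Real.exp x * ((1 + x + x ^ 2 / 2) * Real.exp (-x)) := by linarith
    _ = (1 + x + x ^ 2 / 2) * (Real.exp x * Real.exp (-x)) := by ring
    _ = _ := by rw [h2, mul_one]

/-- Exponential-weights identity: tilting the reference vector `l` by `exp D` and normalizing
changes the divergence from `s` by the log-partition function minus `⟨s, D⟩`. -/
lemma klDiv2_tilt {S A : Type*} [Fintype S] [Fintype A]
    (s l D l' : S → A → ℝ) (Z : ℝ) (hZ : 0 < Z) (hl : ∀ i a, 0 < l i a)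
    (hs0 : ∀ i a, 0 ≤ s i a) (hs1 : ∑ i, ∑ a, s i a = 1)
    (hl' : ∀ i a, l' i a = l i a * Real.exp (D i a) / Z) :
    klDiv2 s l' = klDiv2 s l + Real.log Z - ∑ i, ∑ a, s i a * D i a := by
  have key : ∀ i a, s i a * Real.log (s i a / l' i a) =
      s i a * Real.log (s i a / l i a) + s i a * Real.log Z - s i a * D i a := by
    intro i a
    rcases (hs0 i a).eq_or_lt with h | h
    · simp [← h]
    · have hli := hl i a
      have he := Real.exp_pos (D i a)
      rw [hl', Real.log_div h.ne' (by positivity), Real.log_div (by positivity) hZ.ne',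
        Real.log_mul hli.ne' he.ne', Real.log_exp, Real.log_div h.ne' hli.ne']
      ring
  unfold klDiv2
  simp only [key, Finset.sum_sub_distrib, Finset.sum_add_distrib, ← Finset.sum_mul, hs1, one_mul]

/-- Drift of the divergence when the tilt is supported on the single entry `(i, a)`, where it
takes a nonpositive value `d`. -/
lemma klDiv2_single_tilt_le {S A : Type*} [Fintype S] [Fintype A] [DecidableEq S] [DecidableEq A]
    (s l D l' : S → A → ℝ) (i : S) (a : A) (d : ℝ) (hd : d ≤ 0)
    (hD : ∀ i' a', D i' a' = if i' = i ∧ a' = a then d else 0)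
    (hl : ∀ i a, 0 < l i a) (hl1 : ∑ i, ∑ a, l i a = 1)
    (hs0 : ∀ i a, 0 ≤ s i a) (hs1 : ∑ i, ∑ a, s i a = 1)
    (hl' : ∀ i a, l' i a = l i a * Real.exp (D i a) / ∑ i', ∑ a', l i' a' * Real.exp (D i' a')) :
    klDiv2 s l' ≤ klDiv2 s l + l i a * (d + d ^ 2 / 2) - s i a * d := by
  have sum_single : ∀ (f : S → A → ℝ) (c : ℝ),
      ∑ i', ∑ a', f i' a' * (if i' = i ∧ a' = a then c else 0) = f i a * c := by
    intro f c
    simp [ite_and]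
  have hZ : ∑ i', ∑ a', l i' a' * Real.exp (D i' a') = 1 + l i a * (Real.exp d - 1) := by
    have hsplit : 1 + l i a * (Real.exp d - 1) = ∑ i', ∑ a', l i' a' +
        ∑ i', ∑ a', l i' a' * (if i' = i ∧ a' = a then Real.exp d - 1 else 0) := by
      rw [hl1, sum_single]
    rw [hsplit]
    simp only [← Finset.sum_add_distrib]
    refine Finset.sum_congr rfl fun i' _ => Finset.sum_congr rfl fun a' _ => ?_
    rw [hD]
    split_ifs
    · ring
    · simp
  have hpos : 0 < ∑ i', ∑ a', l i' a' * Real.exp (D i' a') :=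
    Finset.sum_pos (fun i' _ => Finset.sum_pos
      (fun a' _ => mul_pos (hl i' a') (Real.exp_pos _)) ⟨a, Finset.mem_univ a⟩)
      ⟨i, Finset.mem_univ i⟩
  have hlog := Real.log_le_sub_one_of_pos hpos
  rw [klDiv2_tilt s l D l' _ hpos hl hs0 hs1 hl']
  have hsD : ∑ i', ∑ a', s i' a' * D i' a' = s i a * d := by
    simp only [hD, sum_single s d]
  have hexp := mul_le_mul_of_nonneg_left (exp_le_quadratic_of_nonpos hd) (hl i a).le
  rw [hsD]
  rw [hZ] at hlog ⊢
  linarith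

/-- One-step expected KL drift bound for the exponentiated dual update. -/
theorem stmt_11
    {S A : Type*} [Fintype S] [Fintype A] [Nonempty S] [Nonempty A]
    [DecidableEq S] [DecidableEq A]
    (γ : ℝ) (hγ : γ ∈ Set.Ioo (0 : ℝ) 1)
    (p : S → A → S → ℝ)
    (hp0 : ∀ i a j, 0 ≤ p i a j) (hp1 : ∀ i a, ∑ j, p i a j = 1)
    (r : S → A → S → ℝ) (hr : ∀ i a j, r i a j ∈ Set.Icc (0 : ℝ) 1)
    (θ : ℝ) (hθ : θ ∈ Set.Ioc (0 : ℝ) 1)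
    (q : S → ℝ) (hq0 : ∀ i, 0 < q i) (hq1 : ∑ i, q i = 1)
    (ξ : S → ℝ) (hξ0 : ∀ i, 0 < ξ i) (hξ1 : ∑ i, ξ i = 1)
    (π : S → A → ℝ) (hπ0 : ∀ i a, 0 < π i a) (hπ1 : ∀ i, ∑ a, π i a = 1)
    (lam : S → A → ℝ) (hlam : ∀ i a, lam i a = ξ i * π i a)
    (μ : S → A → ℝ) (hμ : ∀ i a, μ i a = ((1 - θ) * ξ i + θ * q i) * π i a)
    (v : S → ℝ) (hv : ∀ k, v k ∈ Set.Icc (0 : ℝ) (1 / (1 - γ)))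
    (M : ℝ) (hM : M = 1 / (1 - γ))
    (β : ℝ) (hβ : 0 < β)
    -- the sampled update vector Δ^{(i,a,j)}
    (Δ : S → A → S → S → A → ℝ)
    (hΔ : ∀ i a j i' a', Δ i a j i' a' =
      if i' = i ∧ a' = a then β * (γ * v j - v i + r i a j - M) / μ i a else 0)
    -- the updated probability vector λ^{(i,a,j)}
    (lam' : S → A → S → S → A → ℝ)
    (hlam' : ∀ i a j i' a', lam' i a j i' a' =
      lam i' a' * Real.exp (Δ i a j i' a') /
        ∑ i'', ∑ a'', lam i'' a'' * Real.exp (Δ i a j i'' a''))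
    -- λ* is an arbitrary probability vector over S × A
    (lamStar : S → A → ℝ) (hls0 : ∀ i a, 0 ≤ lamStar i a)
    (hls1 : ∑ i, ∑ a, lamStar i a = 1) :
    (∑ i, ∑ a, ∑ j, μ i a * p i a j * klDiv2 lamStar (lam' i a j))
        - klDiv2 lamStar lam ≤
      β * ∑ i, ∑ a, (lam i a - lamStar i a) *
          ∑ j, p i a j * (γ * v j - v i + r i a j - M)
        + (β ^ 2 / 2) * ∑ i, ∑ a, (lam i a / μ i a) *
            ∑ j, p i a j * (γ * v j - v i + r i a j - M) ^ 2 := by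
  have hμ0 : ∀ i a, 0 < μ i a := by
    intro i a
    rw [hμ]
    have h1 : 0 ≤ (1 - θ) * ξ i := mul_nonneg (by linarith [hθ.2]) (hξ0 i).le
    have h2 : 0 < θ * q i := mul_pos hθ.1 (hq0 i)
    exact mul_pos (by linarith) (hπ0 i a)
  have hl0 : ∀ i a, 0 < lam i a := fun i a => by
    rw [hlam]; exact mul_pos (hξ0 i) (hπ0 i a)
  have hl1 : ∑ i, ∑ a, lam i a = 1 := by
    simp only [hlam, ← Finset.mul_sum, hπ1, mul_one, hξ1]
  have hμ1 : ∑ i, ∑ a, μ i a = 1 := by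
    simp only [hμ, ← Finset.mul_sum, hπ1, mul_one, Finset.sum_add_distrib, hξ1, hq1]
    ring
  have hg : ∀ i a j, γ * v j - v i + r i a j - M ≤ 0 := by
    intro i a j
    have hM1 : M - γ * M = 1 := by
      rw [hM]
      have : (1 - γ) ≠ 0 := by linarith [hγ.2]
      field_simp
    have h1 : γ * v j ≤ γ * M := mul_le_mul_of_nonneg_left (hM ▸ (hv j).2) hγ.1.le
    linarith [(hv i).1, (hr i a j).2]
  have step : ∀ i a j, μ i a * p i a j * klDiv2 lamStar (lam' i a j) ≤
      μ i a * klDiv2 lamStar lam * p i a j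
      + β * ((lam i a - lamStar i a) * (p i a j * (γ * v j - v i + r i a j - M)))
      + β ^ 2 / 2 * (lam i a / μ i a * (p i a j * (γ * v j - v i + r i a j - M) ^ 2)) := by
    intro i a j
    have hm := hμ0 i a
    have h := klDiv2_single_tilt_le lamStar lam (Δ i a j) (lam' i a j) i a
      (β * (γ * v j - v i + r i a j - M) / μ i a)
      (div_nonpos_of_nonpos_of_nonneg (mul_nonpos_of_nonneg_of_nonpos hβ.le (hg i a j)) hm.le)
      (hΔ i a j) hl0 hl1 hls0 hls1 (hlam' i a j)
    refine (mul_le_mul_of_nonneg_left h (mul_nonneg hm.le (hp0 i a j))).trans_eq ?_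
    field_simp
    ring
  have total := Finset.sum_le_sum fun i (_ : i ∈ Finset.univ) =>
    Finset.sum_le_sum fun a (_ : a ∈ Finset.univ) =>
      Finset.sum_le_sum fun j (_ : j ∈ Finset.univ) => step i a j
  simp only [Finset.sum_add_distrib, ← Finset.mul_sum, hp1, mul_one, ← Finset.sum_mul, hμ1,
    one_mul] at total
  linarith
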